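/- Fix c, d₁ ≥ 0 and d₀ > 0 with d₀ + d₁ − c > 0. Then for all p, q, π ∈ (0,1), (c + p)(1−π) / (d₀ + (d₁−c)π + (1−q)(1−π)) ≤ (1+c) / min(d₀, d₀ + d₁ − c). Consequently, the robust F-score M_Frb satisfies the robustness condition (12) with constant c₂ = (1+c)/min(d₀, d₀+d₁−c), i.e. ∂_q M_Frb / ∂_p M_Frb ≤ c₂ for all π ∈ (0,1/2] and p, q ∈ (0,1). -/

import Mathlib

open Set

/-!
Both partial derivatives of `M` carry the factor `K π / D²`, with `K` the normalization and `D` the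
denominator, so their ratio is `(c + p)(1 - π) / E` with `E = d₀ + (d₁ - c)π + (1 - q)(1 - π)`.
The affine part of `E` runs from `d₀` at `π = 0` to `d₀ + d₁ - c` at `π = 1`, hence stays above the
smaller of these two values, while the numerator is at most `1 + c`.
-/

/-- The normalizing factor `(d₀/π + β² + 1)/(1 + c)` of the robust F-score, which does not depend
on the sensitivity and the specificity. -/
noncomputable def robustFScoreScale (c d₀ β π : ℝ) : ℝ :=
  (d₀ / π + β ^ 2 + 1) / (1 + c)

/-- The denominator of the robust F-score. With `d₁ - c` for `d₁` and `0` for `p` it is also the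
denominator of the ratio of the partial derivatives. -/
def robustFScoreDenom (d₀ d₁ p q π : ℝ) : ℝ :=
  d₀ + d₁ * π + π * p + (1 - q) * (1 - π)

/-- The robust F-score `M_Frb` at sensitivity `p`, specificity `q` and positive-class
proportion `π`. -/
noncomputable def robustFScore (c d₀ d₁ β p q π : ℝ) : ℝ :=
  robustFScoreScale c d₀ β π * ((c * π + π * p) / robustFScoreDenom d₀ d₁ p q π)

section

variable {c d₀ d₁ β p q π : ℝ}

lemma robustFScoreScale_pos (hc : -1 < c) (hd₀ : 0 < d₀) (hπ : 0 < π) :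
    0 < robustFScoreScale c d₀ β π :=
  div_pos (by positivity) (by linarith)

lemma min_le_robustFScoreDenom (hp : 0 ≤ p) (hq : q ≤ 1) (hπ : π ∈ Icc 0 1) :
    min d₀ (d₀ + d₁) ≤ robustFScoreDenom d₀ d₁ p q π := by
  have hπ' : 0 ≤ 1 - π := sub_nonneg.2 hπ.2
  calc min d₀ (d₀ + d₁)
      ≤ (1 - π) * d₀ + π * (d₀ + d₁) :=
        Convex.min_le_combo d₀ (d₀ + d₁) hπ' hπ.1 (sub_add_cancel 1 π)
    _ ≤ (1 - π) * d₀ + π * (d₀ + d₁) + (π * p + (1 - q) * (1 - π)) :=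
        le_add_of_nonneg_right <|
          add_nonneg (mul_nonneg hπ.1 hp) (mul_nonneg (sub_nonneg.2 hq) hπ')
    _ = robustFScoreDenom d₀ d₁ p q π := by rw [robustFScoreDenom]; ring

lemma robustFScoreDenom_pos (hd₀ : 0 < d₀) (hd : 0 < d₀ + d₁)
    (hp : 0 ≤ p) (hq : q ≤ 1) (hπ : π ∈ Icc 0 1) : 0 < robustFScoreDenom d₀ d₁ p q π :=
  (lt_min hd₀ hd).trans_le (min_le_robustFScoreDenom hp hq hπ)

lemma hasDerivAt_robustFScoreDenom_sensitivity :
    HasDerivAt (fun p' => robustFScoreDenom d₀ d₁ p' q π) π p := by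
  simpa only [robustFScoreDenom, mul_one] using
    (((hasDerivAt_id' p).const_mul π).const_add (d₀ + d₁ * π)).add_const ((1 - q) * (1 - π))

lemma hasDerivAt_robustFScoreDenom_specificity :
    HasDerivAt (fun q' => robustFScoreDenom d₀ d₁ p q' π) (-(1 - π)) q := by
  simpa only [robustFScoreDenom, neg_one_mul] using
    (((hasDerivAt_id' q).const_sub 1).mul_const (1 - π)).const_add (d₀ + d₁ * π + π * p)

lemma hasDerivAt_robustFScore_sensitivity (hD : robustFScoreDenom d₀ d₁ p q π ≠ 0) :
    HasDerivAt (fun p' => robustFScore c d₀ d₁ β p' q π)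
      (robustFScoreScale c d₀ β π * π / robustFScoreDenom d₀ d₁ p q π ^ 2 *
        robustFScoreDenom d₀ (d₁ - c) 0 q π) p := by
  have hN : HasDerivAt (fun p' => c * π + π * p') (π * 1) p :=
    ((hasDerivAt_id' p).const_mul π).const_add (c * π)
  have hE : robustFScoreDenom d₀ (d₁ - c) 0 q π =
      robustFScoreDenom d₀ d₁ p q π - (c * π + π * p) := by
    simp only [robustFScoreDenom]; ring
  exact ((hN.fun_div hasDerivAt_robustFScoreDenom_sensitivity hD).const_mul
    (robustFScoreScale c d₀ β π)).congr_deriv (by rw [hE]; ring)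

lemma hasDerivAt_robustFScore_specificity (hD : robustFScoreDenom d₀ d₁ p q π ≠ 0) :
    HasDerivAt (fun q' => robustFScore c d₀ d₁ β p q' π)
      (robustFScoreScale c d₀ β π * π / robustFScoreDenom d₀ d₁ p q π ^ 2 *
        ((c + p) * (1 - π))) q :=
  (((hasDerivAt_const q (c * π + π * p)).fun_div
    hasDerivAt_robustFScoreDenom_specificity hD).const_mul
    (robustFScoreScale c d₀ β π)).congr_deriv (by ring)

lemma deriv_robustFScore_specificity_div_sensitivity (hK : robustFScoreScale c d₀ β π ≠ 0)
    (hπ : π ≠ 0) (hD : robustFScoreDenom d₀ d₁ p q π ≠ 0) :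
    deriv (fun q' => robustFScore c d₀ d₁ β p q' π) q /
        deriv (fun p' => robustFScore c d₀ d₁ β p' q π) p =
      (c + p) * (1 - π) / robustFScoreDenom d₀ (d₁ - c) 0 q π := by
  rw [(hasDerivAt_robustFScore_specificity hD).deriv,
    (hasDerivAt_robustFScore_sensitivity hD).deriv]
  exact mul_div_mul_left _ _ (div_ne_zero (mul_ne_zero hK hπ) (pow_ne_zero 2 hD))

lemma add_mul_one_sub_le_one_add (hc : -1 ≤ c) (hp : p ≤ 1) (hπ : π ∈ Icc 0 1) :
    (c + p) * (1 - π) ≤ 1 + c :=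
  calc (c + p) * (1 - π)
      ≤ (1 + c) * (1 - π) :=
        mul_le_mul_of_nonneg_right (by linarith) (sub_nonneg.2 hπ.2)
    _ ≤ 1 + c := mul_le_of_le_one_right (by linarith) (sub_le_self 1 hπ.1)

lemma robustFScore_ratio_le (hc : -1 ≤ c) (hd₀ : 0 < d₀) (hsum : 0 < d₀ + d₁ - c)
    (hp : p ≤ 1) (hq : q ≤ 1) (hπ : π ∈ Icc 0 1) :
    (c + p) * (1 - π) / robustFScoreDenom d₀ (d₁ - c) 0 q π ≤
      (1 + c) / min d₀ (d₀ + d₁ - c) := by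
  have hE : min d₀ (d₀ + d₁ - c) ≤ robustFScoreDenom d₀ (d₁ - c) 0 q π := by
    simpa only [add_sub_assoc] using min_le_robustFScoreDenom le_rfl hq hπ
  exact div_le_div₀ (by linarith) (add_mul_one_sub_le_one_add hc hp hπ) (lt_min hd₀ hsum) hE

theorem robust_fscore_robustness_general (hc : -1 < c) (hd₀ : 0 < d₀) (hd : 0 < d₀ + d₁)
    (hsum : 0 < d₀ + d₁ - c) (hp : p ∈ Icc 0 1) (hq : q ≤ 1) (hπ : π ∈ Ioc 0 1) :
    (c + p) * (1 - π) / (d₀ + (d₁ - c) * π + (1 - q) * (1 - π)) ≤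
        (1 + c) / min d₀ (d₀ + d₁ - c) ∧
      deriv (fun q' => robustFScore c d₀ d₁ β p q' π) q /
          deriv (fun p' => robustFScore c d₀ d₁ β p' q π) p ≤
        (1 + c) / min d₀ (d₀ + d₁ - c) := by
  have hπ' : π ∈ Icc 0 1 := Ioc_subset_Icc_self hπ
  have ratio_le := robustFScore_ratio_le hc.le hd₀ hsum hp.2 hq hπ'
  constructor
  · simpa only [robustFScoreDenom, mul_zero, add_zero] using ratio_le
  · rwa [deriv_robustFScore_specificity_div_sensitivity (robustFScoreScale_pos hc hd₀ hπ.1).ne'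
      hπ.1.ne' (robustFScoreDenom_pos hd₀ hd hp.1 hq hπ').ne']

end

theorem robust_fscore_robustness
    (c d₀ d₁ : ℝ) (hc : 0 ≤ c) (hd₁ : 0 ≤ d₁) (hd₀ : 0 < d₀)
    (hsum : 0 < d₀ + d₁ - c) (β : ℝ) (hβ : 0 < β)
    (M : ℝ → ℝ → ℝ → ℝ)
    (hM : ∀ p q π : ℝ, M p q π =
      ((d₀ / π + β ^ 2 + 1) / (1 + c)) *
        ((c * π + π * p) / (d₀ + d₁ * π + π * p + (1 - q) * (1 - π)))) :
    (∀ p q π : ℝ, p ∈ Ioo (0:ℝ) 1 → q ∈ Ioo (0:ℝ) 1 → π ∈ Ioo (0:ℝ) 1 →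
      (c + p) * (1 - π) / (d₀ + (d₁ - c) * π + (1 - q) * (1 - π))
        ≤ (1 + c) / min d₀ (d₀ + d₁ - c)) ∧
    (∀ p q π : ℝ, p ∈ Ioo (0:ℝ) 1 → q ∈ Ioo (0:ℝ) 1 → π ∈ Ioc (0:ℝ) (1/2) →
      deriv (fun q' => M p q' π) q / deriv (fun p' => M p' q π) p
        ≤ (1 + c) / min d₀ (d₀ + d₁ - c)) := by
  obtain rfl : M = robustFScore c d₀ d₁ β := by ext p q π; exact hM p q π
  have general {p q π : ℝ} (hp : p ∈ Ioo (0:ℝ) 1) (hq : q ∈ Ioo (0:ℝ) 1) (hπ : π ∈ Ioc (0:ℝ) 1) :=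
    robust_fscore_robustness_general (β := β) (by linarith) hd₀ (by linarith) hsum
      (Ioo_subset_Icc_self hp) hq.2.le hπ
  exact ⟨fun p q π hp hq hπ => (general hp hq (Ioo_subset_Ioc_self hπ)).1,
    fun p q π hp hq hπ => (general hp hq (Ioc_subset_Ioc_right (by norm_num) hπ)).2⟩
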